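/- Let f be a generalized sparse additive model whose components are twice continuously differentiable, and suppose that for each (l,l') ∈ S₂ there exist intervals I_l, I_{l'} ⊆ [−1,1], each of Lebesgue measure at least λ₂ > 0, such that |(∂₁∂₂ φ_{(l,l')})(x_l, x_{l'})| > D₂ for all (x_l, x_{l'}) ∈ I_l × I_{l'}. Let m_x ≥ 1/λ₂ be a positive integer, let G = { j/m_x : j ∈ ℤ, −m_x ≤ j ≤ m_x }, and let χ ⊆ [−1,1]^d be a finite set such that for every pair 1 ≤ l < l' ≤ d, the projection {(x_l, x_{l'}) : x ∈ χ} contains G × G. Suppose Ĥ assigns to each x ∈ χ and each pair q < q' a real number with |Ĥ_{qq'}(x) − ∂_q∂_{q'} f(x)| ≤ τ' for all x ∈ χ and all q < q', where 0 ≤ τ' < D₂/2. Then the set { (q,q') : q < q' and there exists x ∈ χ with |Ĥ_{qq'}(x)| > τ' } equals S₂. -/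

import Mathlib

/-!
For `q < q'`, the mixed partial `∂_q ∂_{q'}` kills every component of the model that ignores `q` or
`q'`, so `∂_q ∂_{q'} f` is `∂₁∂₂ φ_{(q,q')}` when `(q, q') ∈ S₂` and `0` otherwise
(`pdv_pdv_model`). Off `S₂` the estimate is therefore at most `τ'` in absolute value everywhere.

On `S₂`, an interval of length at least `λ₂ ≥ 1 / m_x` has a grid point in its closure
(`exists_grid_mem_closure`), and the bound `|∂₁∂₂ φ| > D₂` on `I × I'` becomes `≥ D₂` on the closure
by continuity (`le_abs_mixed12_of_mem_closure`). At a point of `χ` projecting onto such a grid pair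
the estimate is at least `D₂ - τ' > τ'` in absolute value.
-/

open Finset

/-- Partial derivative of `g : ℝ^d → ℝ` with respect to coordinate `i`, at `x`. -/
noncomputable def pdv {d : ℕ} (i : Fin d) (g : (Fin d → ℝ) → ℝ) (x : Fin d → ℝ) : ℝ :=
  deriv (fun t => g (Function.update x i t)) (x i)

/-- The set of variables appearing in some pair of `S₂`. -/
def varsS {d : ℕ} (S₂ : Finset (Fin d × Fin d)) : Finset (Fin d) :=
  S₂.image Prod.fst ∪ S₂.image Prod.snd

/-- The degree of a variable `l`: the number of pairs of `S₂` containing `l`. -/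
def degS {d : ℕ} (S₂ : Finset (Fin d × Fin d)) (l : Fin d) : ℕ :=
  (S₂.filter (fun e => e.1 = l ∨ e.2 = l)).card

/-- Mixed partial `∂₁∂₂ φ` of a bivariate function. -/
noncomputable def mixed12 (φ : ℝ → ℝ → ℝ) (a b : ℝ) : ℝ :=
  deriv (fun s => deriv (fun t => φ s t) b) a

theorem pdv_eq_fderiv {d : ℕ} (i : Fin d) {g : (Fin d → ℝ) → ℝ} (hg : Differentiable ℝ g)
    (x : Fin d → ℝ) : pdv i g x = fderiv ℝ g x (Pi.single i 1) := by
  have h1 : HasDerivAt (Function.update x i) (Pi.single i (1 : ℝ)) (x i) :=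
    hasDerivAt_update x i (x i)
  have h2 : HasFDerivAt g (fderiv ℝ g x) (Function.update x i (x i)) := by
    rw [Function.update_eq_self]
    exact (hg x).hasFDerivAt
  exact (h2.comp_hasDerivAt (x i) h1).deriv

theorem contDiff_pdv {d : ℕ} (i : Fin d) {g : (Fin d → ℝ) → ℝ} {m n : WithTop ℕ∞}
    (hg : ContDiff ℝ n g) (hmn : m + 1 ≤ n) : ContDiff ℝ m (pdv i g) := by
  have hn : n ≠ 0 := by
    rintro rfl
    simp at hmn
  have h : pdv i g = fun x => fderiv ℝ g x (Pi.single i 1) :=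
    funext (pdv_eq_fderiv i (hg.differentiable hn))
  rw [h]
  exact (hg.fderiv_right hmn).clm_apply contDiff_const

theorem pdv_add {d : ℕ} (i : Fin d) {g h : (Fin d → ℝ) → ℝ} (hg : Differentiable ℝ g)
    (hh : Differentiable ℝ h) :
    pdv i (fun x => g x + h x) = fun x => pdv i g x + pdv i h x := by
  funext x
  rw [pdv_eq_fderiv i (hg.fun_add hh), pdv_eq_fderiv i hg, pdv_eq_fderiv i hh,
    fderiv_fun_add (hg x) (hh x)]
  rfl

theorem pdv_sum {d : ℕ} {ι : Type*} (i : Fin d) (s : Finset ι) {g : ι → (Fin d → ℝ) → ℝ}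
    (hg : ∀ k, Differentiable ℝ (g k)) :
    pdv i (fun x => ∑ k ∈ s, g k x) = fun x => ∑ k ∈ s, pdv i (g k) x := by
  funext x
  rw [pdv_eq_fderiv i (Differentiable.fun_sum fun k _ => hg k),
    fderiv_fun_sum fun k _ => hg k x]
  simp [pdv_eq_fderiv i (hg _)]

theorem pdv_pdv_add {d : ℕ} (i j : Fin d) {g h : (Fin d → ℝ) → ℝ} (hg : ContDiff ℝ 2 g)
    (hh : ContDiff ℝ 2 h) (x : Fin d → ℝ) :
    pdv i (pdv j (fun x => g x + h x)) x = pdv i (pdv j g) x + pdv i (pdv j h) x := by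
  have e : (1 : WithTop ℕ∞) + 1 ≤ 2 := by norm_num
  rw [pdv_add j (hg.differentiable two_ne_zero) (hh.differentiable two_ne_zero),
    pdv_add i ((contDiff_pdv j hg e).differentiable one_ne_zero)
      ((contDiff_pdv j hh e).differentiable one_ne_zero)]

theorem pdv_pdv_sum {d : ℕ} {ι : Type*} (i j : Fin d) (s : Finset ι)
    {g : ι → (Fin d → ℝ) → ℝ} (hg : ∀ k, ContDiff ℝ 2 (g k)) (x : Fin d → ℝ) :
    pdv i (pdv j (fun x => ∑ k ∈ s, g k x)) x = ∑ k ∈ s, pdv i (pdv j (g k)) x := by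
  have e : (1 : WithTop ℕ∞) + 1 ≤ 2 := by norm_num
  rw [pdv_sum j s fun k => (hg k).differentiable two_ne_zero,
    pdv_sum i s fun k => (contDiff_pdv j (hg k) e).differentiable one_ne_zero]

/-- A mixed partial derivative vanishes as soon as the function ignores one of the two distinct
variables. -/
theorem pdv_pdv_eq_zero {d : ℕ} {i j : Fin d} (hij : i ≠ j) {g : (Fin d → ℝ) → ℝ}
    (hg : (∀ x t, g (Function.update x i t) = g x) ∨ ∀ x t, g (Function.update x j t) = g x)
    (x : Fin d → ℝ) : pdv i (pdv j g) x = 0 := by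
  rcases hg with hg | hg
  · have h : ∀ t, pdv j g (Function.update x i t) = pdv j g x := fun t => by
      simp only [pdv, Function.update_of_ne hij.symm, Function.update_comm hij, hg]
    rw [pdv]
    simp only [h, deriv_const]
  · have h : pdv j g = fun _ => 0 := by
      funext y
      simp only [pdv, hg, deriv_const]
    rw [h, pdv, deriv_const]

theorem pdv_pdv_pair {d : ℕ} {i j : Fin d} (hij : i ≠ j) (φ : ℝ → ℝ → ℝ) (x : Fin d → ℝ) :
    pdv i (pdv j (fun y => φ (y i) (y j))) x = mixed12 φ (x i) (x j) := by
  simp [pdv, mixed12, Function.update_of_ne hij, Function.update_of_ne hij.symm]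

theorem contDiff_pair {d : ℕ} (i j : Fin d) {φ : ℝ → ℝ → ℝ}
    (hφ : ContDiff ℝ 2 fun z : ℝ × ℝ => φ z.1 z.2) :
    ContDiff ℝ 2 fun y : Fin d → ℝ => φ (y i) (y j) :=
  hφ.comp ((contDiff_apply ℝ ℝ i).prodMk (contDiff_apply ℝ ℝ j))

theorem continuous_mixed12 {φ : ℝ → ℝ → ℝ} (hφ : ContDiff ℝ 2 fun z : ℝ × ℝ => φ z.1 z.2) :
    Continuous fun p : ℝ × ℝ => mixed12 φ p.1 p.2 := by
  -- `∂₁∂₂ φ` is read as an iterated `pdv` on `Fin 2 → ℝ`.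
  have h1 : ContDiff ℝ 1 (pdv (1 : Fin 2) fun y => φ (y 0) (y 1)) :=
    contDiff_pdv 1 (contDiff_pair 0 1 hφ) (by norm_num)
  have h0 : ContDiff ℝ 0 (pdv (0 : Fin 2) (pdv 1 fun y => φ (y 0) (y 1))) :=
    contDiff_pdv 0 h1 (by norm_num)
  have hc : Continuous fun p : ℝ × ℝ => ![p.1, p.2] := by
    refine continuous_pi fun k => ?_
    fin_cases k
    · exact continuous_fst
    · exact continuous_snd
  have h := h0.continuous.comp hc
  convert h using 2 with p
  simp [pdv_pdv_pair (zero_ne_one : (0 : Fin 2) ≠ 1)]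

/-- The closure is needed: an open interval of length exactly `1 / m` may miss the grid. -/
theorem exists_grid_mem_closure {I : Set ℝ} {lam : ℝ} (hlam : 0 < lam) (hI : I ⊆ Set.Icc (-1) 1)
    (hc : IsConnected I) (hv : ENNReal.ofReal lam ≤ MeasureTheory.volume I) {m : ℕ} (hm : 0 < m)
    (hml : 1 / lam ≤ (m : ℝ)) :
    ∃ j : ℤ, -(m : ℤ) ≤ j ∧ j ≤ (m : ℤ) ∧ (j : ℝ) / (m : ℝ) ∈ closure I := by
  have hb : BddBelow I := bddBelow_Icc.mono hI
  have ha : BddAbove I := bddAbove_Icc.mono hI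
  have hm' : (0 : ℝ) < m := by exact_mod_cast hm
  have hsub : Set.Icc (sInf I) (sSup I) ⊆ closure I :=
    hc.isPreconnected.closure.Icc_subset (csInf_mem_closure hc.nonempty hb)
      (csSup_mem_closure hc.nonempty ha)
  have hle : sInf I ≤ sSup I := csInf_le_csSup hc.nonempty hb ha
  have hlen : lam ≤ sSup I - sInf I := by
    have h : MeasureTheory.volume I ≤ ENNReal.ofReal (sSup I - sInf I) :=
      (MeasureTheory.measure_mono (subset_Icc_csInf_csSup hb ha)).trans_eq Real.volume_Icc
    exact (ENNReal.ofReal_le_ofReal_iff (sub_nonneg.2 hle)).1 (hv.trans h)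
  have hlo : -1 ≤ sInf I := le_csInf hc.nonempty fun y hy => (hI hy).1
  have hhi : sSup I ≤ 1 := csSup_le hc.nonempty fun y hy => (hI hy).2
  have hone : 1 ≤ (sSup I - sInf I) * m :=
    ((div_le_iff₀' hlam).1 hml).trans (mul_le_mul_of_nonneg_right hlen hm'.le)
  have h1 : sInf I * m ≤ ⌈sInf I * m⌉ := Int.le_ceil _
  have h2 : (⌈sInf I * m⌉ : ℝ) < sInf I * m + 1 := Int.ceil_lt_add_one _
  refine ⟨⌈sInf I * m⌉, ?_, ?_, hsub ⟨(le_div_iff₀ hm').2 h1, (div_le_iff₀ hm').2 ?_⟩⟩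
  · have : (-(m : ℝ)) ≤ ⌈sInf I * m⌉ := by nlinarith
    exact_mod_cast this
  · have : (⌈sInf I * m⌉ : ℝ) ≤ m := by nlinarith
    exact_mod_cast this
  · linarith

theorem le_abs_mixed12_of_mem_closure {φ : ℝ → ℝ → ℝ}
    (hφ : ContDiff ℝ 2 fun z : ℝ × ℝ => φ z.1 z.2) {I I' : Set ℝ} {D : ℝ}
    (h : ∀ a ∈ I, ∀ b ∈ I', D < |mixed12 φ a b|) {a b : ℝ} (ha : a ∈ closure I)
    (hb : b ∈ closure I') : D ≤ |mixed12 φ a b| := by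
  have hcl : IsClosed {p : ℝ × ℝ | D ≤ |mixed12 φ p.1 p.2|} :=
    isClosed_le continuous_const (continuous_mixed12 hφ).abs
  have hs : I ×ˢ I' ⊆ {p : ℝ × ℝ | D ≤ |mixed12 φ p.1 p.2|} :=
    fun p hp => (h p.1 hp.1 p.2 hp.2).le
  have hmem : (a, b) ∈ closure (I ×ˢ I') := by
    rw [closure_prod_eq]
    exact ⟨ha, hb⟩
  exact closure_minimal hs hcl hmem

/-- The mixed partial derivative of an additive model only sees the bivariate component attached to
the pair of variables. The orderings exclude a component with its arguments swapped. -/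
theorem pdv_pdv_model {d : ℕ} (S₁ T : Finset (Fin d)) (S₂ : Finset (Fin d × Fin d))
    (hS₂ : ∀ e ∈ S₂, e.1 < e.2)
    (c : ℝ) (φ₁ : Fin d → ℝ → ℝ) (φ₂ : Fin d × Fin d → ℝ → ℝ → ℝ) (ψ : Fin d → ℝ → ℝ)
    (hφ₁ : ∀ p, ContDiff ℝ 2 (φ₁ p))
    (hφ₂ : ∀ e, ContDiff ℝ 2 (fun z : ℝ × ℝ => φ₂ e z.1 z.2))
    (hψ : ∀ q, ContDiff ℝ 2 (ψ q)) {i j : Fin d} (hij : i < j) (x : Fin d → ℝ) :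
    pdv i (pdv j fun x => c + (∑ p ∈ S₁, φ₁ p (x p)) + (∑ e ∈ S₂, φ₂ e (x e.1) (x e.2))
        + ∑ q ∈ T, ψ q (x q)) x
      = if (i, j) ∈ S₂ then mixed12 (φ₂ (i, j)) (x i) (x j) else 0 := by
  have c₁ : ∀ p, ContDiff ℝ 2 fun y : Fin d → ℝ => φ₁ p (y p) :=
    fun p => (hφ₁ p).comp (contDiff_apply ℝ ℝ p)
  have c₂ : ∀ e : Fin d × Fin d, ContDiff ℝ 2 fun y : Fin d → ℝ => φ₂ e (y e.1) (y e.2) :=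
    fun e => contDiff_pair e.1 e.2 (hφ₂ e)
  have c₃ : ∀ p, ContDiff ℝ 2 fun y : Fin d → ℝ => ψ p (y p) :=
    fun p => (hψ p).comp (contDiff_apply ℝ ℝ p)
  have huni : ∀ (g : ℝ → ℝ) (p : Fin d), pdv i (pdv j fun y => g (y p)) x = 0 := by
    intro g p
    refine pdv_pdv_eq_zero hij.ne ?_ x
    by_cases hp : p = i
    · right
      intro y t
      rw [Function.update_of_ne (hp.trans_ne hij.ne)]
    · left
      intro y t
      rw [Function.update_of_ne hp]
  have hbi : ∀ e ∈ S₂, pdv i (pdv j fun y => φ₂ e (y e.1) (y e.2)) x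
      = if e = (i, j) then mixed12 (φ₂ (i, j)) (x i) (x j) else 0 := by
    intro e he
    split_ifs with h
    · subst h
      exact pdv_pdv_pair hij.ne _ x
    · refine pdv_pdv_eq_zero hij.ne ?_ x
      have hlt := hS₂ e he
      by_cases hi : e.1 ≠ i ∧ e.2 ≠ i
      · left
        intro y t
        rw [Function.update_of_ne hi.1, Function.update_of_ne hi.2]
      · right
        have hj : e.1 ≠ j ∧ e.2 ≠ j := by
          rw [Prod.ext_iff] at h
          grind
        intro y t
        rw [Function.update_of_ne hj.1, Function.update_of_ne hj.2]
  have s₁ := ContDiff.sum (s := S₁) fun p _ => c₁ p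
  have s₂ := ContDiff.sum (s := S₂) fun p _ => c₂ p
  have s₃ := ContDiff.sum (s := T) fun p _ => c₃ p
  have s₀ : ContDiff ℝ 2 fun _ : Fin d → ℝ => c := contDiff_const
  rw [pdv_pdv_add i j ((s₀.add s₁).add s₂) s₃, pdv_pdv_add i j (s₀.add s₁) s₂,
    pdv_pdv_add i j s₀ s₁, pdv_pdv_sum i j _ c₁, pdv_pdv_sum i j _ c₂, pdv_pdv_sum i j _ c₃,
    pdv_pdv_eq_zero hij.ne (Or.inl fun _ _ => rfl), Finset.sum_congr rfl hbi]
  simp [huni]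

/-- exact recovery of `S₂` by thresholding approximate mixed partial
derivatives of `f` over a grid-covering set of points `χ`. -/
theorem stmt7 {d : ℕ} (hd : 2 ≤ d)
    (S₁ : Finset (Fin d)) (S₂ : Finset (Fin d × Fin d))
    (hS₂ : ∀ e ∈ S₂, e.1 < e.2)
    (hdisj : Disjoint S₁ (varsS S₂))
    (c : ℝ) (φ₁ : Fin d → ℝ → ℝ) (φ₂ : Fin d × Fin d → ℝ → ℝ → ℝ) (ψ : Fin d → ℝ → ℝ)
    (hφ₁ : ∀ p, ContDiff ℝ 2 (φ₁ p))
    (hφ₂ : ∀ e, ContDiff ℝ 2 (fun z : ℝ × ℝ => φ₂ e z.1 z.2))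
    (hψ : ∀ q, ContDiff ℝ 2 (ψ q))
    (f : (Fin d → ℝ) → ℝ)
    (hf : ∀ x, f x = c + (∑ p ∈ S₁, φ₁ p (x p)) + (∑ e ∈ S₂, φ₂ e (x e.1) (x e.2))
        + ∑ q ∈ (varsS S₂).filter (fun q => 1 < degS S₂ q), ψ q (x q))
    (lam₂ D₂ : ℝ) (hlam₂ : 0 < lam₂)
    (hI : ∀ e ∈ S₂, ∃ I I' : Set ℝ,
        I ⊆ Set.Icc (-1 : ℝ) 1 ∧ I' ⊆ Set.Icc (-1 : ℝ) 1 ∧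
        IsConnected I ∧ IsConnected I' ∧
        ENNReal.ofReal lam₂ ≤ MeasureTheory.volume I ∧
        ENNReal.ofReal lam₂ ≤ MeasureTheory.volume I' ∧
        ∀ a ∈ I, ∀ b ∈ I', D₂ < |mixed12 (φ₂ e) a b|)
    (mx : ℕ) (hmx : 0 < mx) (hmxlam : 1 / lam₂ ≤ (mx : ℝ))
    (G : Set ℝ)
    (hG : G = {t : ℝ | ∃ j : ℤ, -(mx : ℤ) ≤ j ∧ j ≤ (mx : ℤ) ∧ t = (j : ℝ) / (mx : ℝ)})
    (χ : Finset (Fin d → ℝ))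
    (hχ : ∀ x ∈ χ, ∀ i : Fin d, x i ∈ Set.Icc (-1 : ℝ) 1)
    (hproj : ∀ l l' : Fin d, l < l' → ∀ a ∈ G, ∀ b ∈ G,
        ∃ x ∈ χ, x l = a ∧ x l' = b)
    (Hhat : (Fin d → ℝ) → Fin d → Fin d → ℝ) (τ' : ℝ)
    (hτ'0 : 0 ≤ τ') (hτ'D : τ' < D₂ / 2)
    (happrox : ∀ x ∈ χ, ∀ q q' : Fin d, q < q' →
        |Hhat x q q' - pdv q (pdv q' f) x| ≤ τ') :
    {e : Fin d × Fin d | e.1 < e.2 ∧ ∃ x ∈ χ, τ' < |Hhat x e.1 e.2|}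
      = (S₂ : Set (Fin d × Fin d)) := by
  have hmix : ∀ i j : Fin d, i < j → ∀ x, pdv i (pdv j f) x
      = if (i, j) ∈ S₂ then mixed12 (φ₂ (i, j)) (x i) (x j) else 0 := by
    intro i j hij x
    rw [funext hf]
    exact pdv_pdv_model S₁ _ S₂ hS₂ c φ₁ φ₂ ψ hφ₁ hφ₂ hψ hij x
  ext ⟨i, j⟩
  simp only [Set.mem_ofPred_eq, Finset.mem_coe]
  constructor
  · rintro ⟨hij, x, hx, hlt⟩
    by_contra hn
    have h := happrox x hx i j hij
    rw [hmix i j hij, if_neg hn, sub_zero] at h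
    exact absurd hlt h.not_gt
  · intro he
    have hij : i < j := hS₂ _ he
    obtain ⟨I, I', hs, hs', hc, hc', hv, hv', hD⟩ := hI _ he
    obtain ⟨k, hk1, hk2, hk⟩ := exists_grid_mem_closure hlam₂ hs hc hv hmx hmxlam
    obtain ⟨k', hk1', hk2', hk'⟩ := exists_grid_mem_closure hlam₂ hs' hc' hv' hmx hmxlam
    subst hG
    obtain ⟨x, hx, hxi, hxj⟩ := hproj i j hij _ ⟨k, hk1, hk2, rfl⟩ _ ⟨k', hk1', hk2', rfl⟩
    refine ⟨hij, x, hx, ?_⟩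
    have h := happrox x hx i j hij
    rw [hmix i j hij, if_pos he, hxi, hxj] at h
    have hle := le_abs_mixed12_of_mem_closure (hφ₂ (i, j)) hD hk hk'
    -- `|Hhat| ≥ D₂ - τ' > τ'`
    have htri := abs_sub_abs_le_abs_sub (mixed12 (φ₂ (i, j)) (k / mx) (k' / mx)) (Hhat x i j)
    rw [abs_sub_comm] at htri
    linarith
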